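/- Let p ∈ ℕ ∪ {∞}. The category □_p admits the following presentation by generators and relations: let Q be the quiver whose vertices are the levels l ≤ p and whose arrows are formal symbols F_⋆(l,k) : l+1 → l for ⋆ ∈ Bool, k ≤ l < p, and D(l,k) : l → l+1 for k ≤ l < p; let ∼ be the congruence on the free (path) category on Q generated by the five cubical relations (1) F_⋆(l,k) ∘ D(l,k) = id_l for l < p, (2) F_⋆(l,j) ∘ D(l,k) = D(l−1,k) ∘ F_⋆(l−1,j−1) for k < j and l < p, (3) F_⋆(l,j) ∘ D(l,k) = D(l−1,k−1) ∘ F_⋆(l−1,j) for j < k and l < p, (4) D(l+1,j) ∘ D(l,k) = D(l+1,k) ∘ D(l,j−1) for k < j and l+1 < p, and (5) F_{⋆₂}(l,j) ∘ F_{⋆₁}(l+1,k) = F_{⋆₁}(l,k) ∘ F_{⋆₂}(l+1,j+1) for k ≤ j and l+1 < p. Then the canonical functor from the free category on Q to □ sending F_⋆(l,k) to the face map f_⋆(l,k) and D(l,k) to the degeneracy d(l,k) identifies ∼-related paths, and the induced functor from the quotient category (free category on Q modulo ∼) to □ is faithful, with image the subcategory □_p. -/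

import Mathlib

/-- Kleisli composition with error propagation: `(kcomp g f) i = g j` if `f i = Sum.inl j`,
and `Sum.inr ⋆` if `f i = Sum.inr ⋆`. -/
def kcomp {l₁ l₂ l₃ : ℕ} (g : Fin l₂ → Fin l₃ ⊕ Bool) (f : Fin l₁ → Fin l₂ ⊕ Bool) :
    Fin l₁ → Fin l₃ ⊕ Bool := fun i =>
  match f i with
  | Sum.inl j => g j
  | Sum.inr b => Sum.inr b

/-- The face map `f_⋆(l,k) : l+1 → l` in the category `□`. -/
def faceMap (b : Bool) (l k : ℕ) (hk : k ≤ l) : Fin (l + 1) → Fin l ⊕ Bool := fun i =>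
  if h1 : (i : ℕ) < k then Sum.inl ⟨i, by omega⟩
  else if h2 : (i : ℕ) = k then Sum.inr b
  else Sum.inl ⟨(i : ℕ) - 1, by have := i.isLt; omega⟩

/-- The degeneracy `d(l,k) : l → l+1` in the category `□`. -/
def degenMap (l k : ℕ) : Fin l → Fin (l + 1) ⊕ Bool := fun i =>
  if (i : ℕ) < k then Sum.inl ⟨i, by have := i.isLt; omega⟩
  else Sum.inl ⟨(i : ℕ) + 1, by have := i.isLt; omega⟩

open CategoryTheory

theorem kcomp_inl {l₁ l₂ : ℕ} (f : Fin l₁ → Fin l₂ ⊕ Bool) : kcomp Sum.inl f = f := by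
  funext i; unfold kcomp; cases f i <;> rfl

theorem kcomp_assoc {l₁ l₂ l₃ l₄ : ℕ} (h : Fin l₃ → Fin l₄ ⊕ Bool)
    (g : Fin l₂ → Fin l₃ ⊕ Bool) (f : Fin l₁ → Fin l₂ ⊕ Bool) :
    kcomp (kcomp h g) f = kcomp h (kcomp g f) := by
  funext i; unfold kcomp; cases f i <;> rfl

/-- The category `□`: objects are natural numbers, morphisms `l₁ ⟶ l₂` are functions
`Fin l₁ → Fin l₂ ⊕ Bool`, identity is `Sum.inl`, composition is Kleisli composition with
error propagation. -/
def BoxCat : Type := ℕ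

instance : CategoryStruct BoxCat where
  Hom l₁ l₂ := Fin l₁ → Fin l₂ ⊕ Bool
  id _ := Sum.inl
  comp f g := kcomp g f

instance : Category BoxCat where
  id_comp _ := rfl
  comp_id f := kcomp_inl f
  assoc f g h := (kcomp_assoc h g f).symm

/-- Membership in the subcategory `□_p` of `□`: `BoxP p l₁ l₂ h` says that `h` is a morphism
`l₁ → l₂` of `□_p`, i.e. is generated under identities and composition by the face maps
`f_⋆(l,k)` for `⋆ ∈ Bool`, `k ≤ l < p` and the degeneracies `d(l,k)` for `k ≤ l < p`. -/
inductive BoxP (p : ℕ∞) : ∀ (l₁ l₂ : ℕ), (Fin l₁ → Fin l₂ ⊕ Bool) → Prop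
  | id (l : ℕ) (hl : (l : ℕ∞) ≤ p) : BoxP p l l Sum.inl
  | face (b : Bool) (l k : ℕ) (hk : k ≤ l) (hl : (l : ℕ∞) < p) :
      BoxP p (l + 1) l (faceMap b l k hk)
  | degen (l k : ℕ) (hk : k ≤ l) (hl : (l : ℕ∞) < p) :
      BoxP p l (l + 1) (degenMap l k)
  | comp {l₁ l₂ l₃ : ℕ} {f : Fin l₁ → Fin l₂ ⊕ Bool} {g : Fin l₂ → Fin l₃ ⊕ Bool} :
      BoxP p l₁ l₂ f → BoxP p l₂ l₃ g → BoxP p l₁ l₃ (kcomp g f)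

theorem succ_le_of_lt' {p : ℕ∞} {l : ℕ} (h : (l : ℕ∞) < p) : ((l + 1 : ℕ) : ℕ∞) ≤ p := by
  push_cast
  exact Order.add_one_le_of_lt h

/-- The vertices of the quiver `Q`: the levels `l ≤ p`. -/
structure VV (p : ℕ∞) : Type where
  lvl : ℕ
  le : (lvl : ℕ∞) ≤ p

/-- The arrows of the quiver `Q`: formal symbols `F_⋆(l,k) : l+1 → l` for `⋆ ∈ Bool`,
`k ≤ l < p`, and `D(l,k) : l → l+1` for `k ≤ l < p`. -/
inductive GenArrow (p : ℕ∞) : VV p → VV p → Type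
  | F (b : Bool) (l k : ℕ) (hk : k ≤ l) (hl : (l : ℕ∞) < p) :
      GenArrow p ⟨l + 1, succ_le_of_lt' hl⟩ ⟨l, hl.le⟩
  | D (l k : ℕ) (hk : k ≤ l) (hl : (l : ℕ∞) < p) :
      GenArrow p ⟨l, hl.le⟩ ⟨l + 1, succ_le_of_lt' hl⟩

instance (p : ℕ∞) : Quiver (VV p) := ⟨GenArrow p⟩

/-- The prefunctor sending the vertex `l` to `l`, the formal arrow `F_⋆(l,k)` to the face map
`f_⋆(l,k)` and the formal arrow `D(l,k)` to the degeneracy `d(l,k)`. -/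
def genPrefunctor (p : ℕ∞) : VV p ⥤q BoxCat where
  obj x := x.1
  map {X Y} a :=
    match a with
    | GenArrow.F b l k hk _ => faceMap b l k hk
    | GenArrow.D l k _ _ => degenMap l k

/-- The canonical functor from the free (path) category on the quiver `Q` to `□`, sending
`F_⋆(l,k)` to the face map `f_⋆(l,k)` and `D(l,k)` to the degeneracy `d(l,k)`. -/
def canonicalFunctor (p : ℕ∞) : Paths (VV p) ⥤ BoxCat :=
  Paths.lift (genPrefunctor p)

/-- The formal arrow `F_⋆(l,k)`, as a (length-one) path in the free category on `Q`. -/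
def fPath (p : ℕ∞) (b : Bool) (l k : ℕ) (hk : k ≤ l) (hl : (l : ℕ∞) < p) :
    Quiver.Path (⟨l + 1, succ_le_of_lt' hl⟩ : VV p) ⟨l, hl.le⟩ :=
  Quiver.Path.nil.cons (GenArrow.F b l k hk hl)

/-- The formal arrow `D(l,k)`, as a (length-one) path in the free category on `Q`. -/
def dPath (p : ℕ∞) (l k : ℕ) (hk : k ≤ l) (hl : (l : ℕ∞) < p) :
    Quiver.Path (⟨l, hl.le⟩ : VV p) ⟨l + 1, succ_le_of_lt' hl⟩ :=
  Quiver.Path.nil.cons (GenArrow.D l k hk hl)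

/-- The five cubical relations generating the congruence `∼` on the free category on `Q`.
The composite `g ∘ f` (apply `f` first) appears as the path `f.comp g`.
(Relations (2), (3) are stated with `l = m + 1`, which is forced by their side conditions,
so that the levels `l - 1 = m` are handled without natural-number subtraction.) -/
inductive CubeRel (p : ℕ∞) : ∀ {X Y : VV p}, Quiver.Path X Y → Quiver.Path X Y → Prop
  | rel1 (b : Bool) (l k : ℕ) (hk : k ≤ l) (hl : (l : ℕ∞) < p) :
      CubeRel p ((dPath p l k hk hl).comp (fPath p b l k hk hl))
        (Quiver.Path.nil : Quiver.Path (⟨l, hl.le⟩ : VV p) ⟨l, hl.le⟩)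
  | rel2 (b : Bool) (m j k : ℕ) (hkj : k < j) (hj : j ≤ m + 1) (hk1 : k ≤ m + 1)
      (hj1 : j - 1 ≤ m) (hk0 : k ≤ m)
      (hl1 : ((m + 1 : ℕ) : ℕ∞) < p) (hl0 : (m : ℕ∞) < p) :
      CubeRel p
        ((dPath p (m + 1) k hk1 hl1).comp (fPath p b (m + 1) j hj hl1))
        ((fPath p b m (j - 1) hj1 hl0).comp (dPath p m k hk0 hl0))
  | rel3 (b : Bool) (m j k : ℕ) (hjk : j < k) (hk : k ≤ m + 1) (hj1 : j ≤ m + 1)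
      (hk1 : k - 1 ≤ m) (hj0 : j ≤ m)
      (hl1 : ((m + 1 : ℕ) : ℕ∞) < p) (hl0 : (m : ℕ∞) < p) :
      CubeRel p
        ((dPath p (m + 1) k hk hl1).comp (fPath p b (m + 1) j hj1 hl1))
        ((fPath p b m j hj0 hl0).comp (dPath p m (k - 1) hk1 hl0))
  | rel4 (l j k : ℕ) (hkj : k < j) (hj : j ≤ l + 1) (hk : k ≤ l) (hj1 : j - 1 ≤ l)
      (hk1 : k ≤ l + 1) (hl1 : ((l + 1 : ℕ) : ℕ∞) < p) (hl0 : (l : ℕ∞) < p) :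
      CubeRel p
        ((dPath p l k hk hl0).comp (dPath p (l + 1) j hj hl1))
        ((dPath p l (j - 1) hj1 hl0).comp (dPath p (l + 1) k hk1 hl1))
  | rel5 (b₁ b₂ : Bool) (l j k : ℕ) (hkj : k ≤ j) (hj : j ≤ l) (hk : k ≤ l)
      (hk1 : k ≤ l + 1) (hj1 : j + 1 ≤ l + 1)
      (hl1 : ((l + 1 : ℕ) : ℕ∞) < p) (hl0 : (l : ℕ∞) < p) :
      CubeRel p
        ((fPath p b₁ (l + 1) k hk1 hl1).comp (fPath p b₂ l j hj hl0))
        ((fPath p b₂ (l + 1) (j + 1) hj1 hl1).comp (fPath p b₁ l k hk hl0))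

/-- The five cubical relations, as a `HomRel` on the free category on `Q`. -/
def cubeRel (p : ℕ∞) : HomRel (Paths (VV p)) := fun {X Y} f g => @CubeRel p X Y f g

/-- A function `Fin l₁ → Fin l₂ ⊕ Bool`, seen as a morphism `l₁ ⟶ l₂` of `□`. -/
def boxHom {l₁ l₂ : ℕ} (f : Fin l₁ → Fin l₂ ⊕ Bool) :
    @Quiver.Hom BoxCat _ l₁ l₂ := f

/-!
The relations rewrite every path as a composite of faces followed by degeneracies. From the
underlying function of such a normal form one can split off a generator at either end: a value
`k` sent to the error `b` forces a first factor `F_b(k)`, and a value `k` that is missed forces a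
last factor `D(k)`. Faces and degeneracies are cancellable, and a normal form without errors and
missed values is an identity, so induction on the normal form recovers the path, up to `∼`, from
its function.
-/

/-! ### The cubical identities for functions -/

theorem kcomp_faceMap_degenMap_self (b : Bool) (l k : ℕ) (hk : k ≤ l) :
    kcomp (faceMap b l k hk) (degenMap l k) = Sum.inl := by
  funext i
  simp only [kcomp, degenMap, faceMap]
  grind

theorem kcomp_faceMap_degenMap_of_lt (b : Bool) {l j k : ℕ} (hkj : k < j) (hj : j ≤ l + 1) :
    kcomp (faceMap b (l + 1) j hj) (degenMap (l + 1) k) =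
      kcomp (degenMap l k) (faceMap b l (j - 1) (by omega)) := by
  funext i
  simp only [kcomp, degenMap, faceMap]
  grind

theorem kcomp_faceMap_degenMap_of_gt (b : Bool) {l j k : ℕ} (hjk : j < k) (hk : k ≤ l + 1) :
    kcomp (faceMap b (l + 1) j (by omega)) (degenMap (l + 1) k) =
      kcomp (degenMap l (k - 1)) (faceMap b l j (by omega)) := by
  funext i
  simp only [kcomp, degenMap, faceMap]
  grind

theorem kcomp_degenMap_degenMap (l : ℕ) {j k : ℕ} (hkj : k < j) :
    kcomp (degenMap (l + 1) j) (degenMap l k) =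
      kcomp (degenMap (l + 1) k) (degenMap l (j - 1)) := by
  funext i
  simp only [kcomp, degenMap]
  grind

theorem kcomp_faceMap_faceMap (b₁ b₂ : Bool) {l j k : ℕ} (hkj : k ≤ j) (hj : j ≤ l) :
    kcomp (faceMap b₂ l j hj) (faceMap b₁ (l + 1) k (by omega)) =
      kcomp (faceMap b₁ l k (by omega)) (faceMap b₂ (l + 1) (j + 1) (by omega)) := by
  funext i
  simp only [kcomp, faceMap]
  grind

theorem canonicalFunctor_map_eq_of_cubeRel {p : ℕ∞} (X Y : Paths (VV p)) (f g : X ⟶ Y)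
    (h : cubeRel p f g) : (canonicalFunctor p).map f = (canonicalFunctor p).map g := by
  cases h with
  | rel1 b l k hk => exact kcomp_faceMap_degenMap_self b l k hk
  | rel2 b m j k hkj hj => exact kcomp_faceMap_degenMap_of_lt b hkj hj
  | rel3 b m j k hjk hk => exact kcomp_faceMap_degenMap_of_gt b hjk hk
  | rel4 l j k hkj => exact kcomp_degenMap_degenMap l hkj
  | rel5 b₁ b₂ l j k hkj hj => exact kcomp_faceMap_faceMap b₁ b₂ hkj hj

theorem degenMap_eq_succAbove {l : ℕ} (k : Fin (l + 1)) (i : Fin l) :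
    degenMap l k i = Sum.inl (k.succAbove i) := by
  simp only [degenMap, Fin.succAbove, Fin.lt_def, Fin.val_castSucc]
  split_ifs <;> rfl

theorem faceMap_self (b : Bool) {l : ℕ} (k : Fin (l + 1)) :
    faceMap b l k k.is_le k = Sum.inr b := by
  simp [faceMap]

theorem faceMap_succAbove (b : Bool) {l : ℕ} (k : Fin (l + 1)) (i : Fin l) :
    faceMap b l k k.is_le (k.succAbove i) = Sum.inl i := by
  simp only [faceMap, Fin.succAbove, Fin.lt_def]
  grind

/-! ### The quotient category -/

theorem coe_lt_of_coe_succ_le {p : ℕ∞} {l : ℕ} (h : ((l + 1 : ℕ) : ℕ∞) ≤ p) : (l : ℕ∞) < p :=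
  (Nat.cast_lt.2 l.lt_succ_self).trans_le h

/-- The category presented by the cubical generators and relations: the free category on `Q`
modulo `∼`. -/
abbrev CubeCat (p : ℕ∞) : Type := CategoryTheory.Quotient (cubeRel p)

namespace CubeCat

variable {p : ℕ∞}

/-- The level `l ≤ p`, as an object of the presented category. -/
abbrev level (l : ℕ) (h : (l : ℕ∞) ≤ p) : CubeCat p := ⟨⟨l, h⟩⟩

/-- The level below `X`, with `0` below itself. Faces leave `X` for `pred X` and degeneracies enter
`X` from `pred X`; as their index is an element of `Fin X.as.lvl`, there are none at level `0`. -/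
abbrev pred : CubeCat p → CubeCat p
  | ⟨⟨0, h⟩⟩ => level 0 h
  | ⟨⟨l + 1, h⟩⟩ => level l (coe_lt_of_coe_succ_le h).le

theorem exists_eq_level_add_two {X : CubeCat p} {j k : Fin X.as.lvl} (hjk : j ≠ k) :
    ∃ (l : ℕ) (h : ((l + 2 : ℕ) : ℕ∞) ≤ p), X = level (l + 2) h := by
  obtain ⟨⟨_ | _ | l, h⟩⟩ := X
  · exact j.elim0
  · exact absurd (Subsingleton.elim (α := Fin 1) j k) hjk
  · exact ⟨l, h, rfl⟩

/-- The class of the formal arrow `F_b(l,k)`, where `l + 1` is the level of `X`. -/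
def face (b : Bool) : ∀ {X : CubeCat p}, Fin X.as.lvl → (X ⟶ pred X)
  | ⟨⟨l + 1, h⟩⟩, k =>
    (Quotient.functor (cubeRel p)).map (fPath p b l k k.is_le (coe_lt_of_coe_succ_le h))

/-- The class of the formal arrow `D(l,k)`, where `l + 1` is the level of `X`. -/
def degen : ∀ {X : CubeCat p}, Fin X.as.lvl → (pred X ⟶ X)
  | ⟨⟨l + 1, h⟩⟩, k =>
    (Quotient.functor (cubeRel p)).map (dPath p l k k.is_le (coe_lt_of_coe_succ_le h))

theorem degen_face_self (b : Bool) : ∀ {X : CubeCat p} (k : Fin X.as.lvl),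
    degen k ≫ face b k = 𝟙 (pred X)
  | ⟨⟨l + 1, _⟩⟩, k => CategoryTheory.Quotient.sound _ (CubeRel.rel1 b l k k.is_le _)

section Exchange

variable {l : ℕ} (h : ((l + 2 : ℕ) : ℕ∞) ≤ p)

theorem degen_face_succAbove (b : Bool) (k : Fin (l + 2)) (i : Fin (l + 1)) :
    degen (X := level (l + 2) h) k ≫ face b (k.succAbove i) =
      face b (X := pred (level (l + 2) h)) i ≫ degen (i.predAbove k) := by
  have h₁ := coe_lt_of_coe_succ_le h
  have h₀ := coe_lt_of_coe_succ_le h₁.le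
  rcases lt_or_ge i.castSucc k with hik | hki
  · rw [Fin.succAbove_of_castSucc_lt _ _ hik, Fin.predAbove_of_castSucc_lt _ _ hik]
    exact CategoryTheory.Quotient.sound _
      (CubeRel.rel3 b l i k hik k.is_le (by omega) (by omega) i.is_le h₁ h₀)
  · rw [Fin.succAbove_of_le_castSucc _ _ hki, Fin.predAbove_of_le_castSucc _ _ hki]
    exact CategoryTheory.Quotient.sound _
      (CubeRel.rel2 b l (i + 1) k (Nat.lt_succ_of_le hki) (by omega) k.is_le i.is_le
        (Nat.le_trans hki i.is_le) h₁ h₀)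

theorem degen_degen (i : Fin (l + 1)) (j : Fin (l + 2)) :
    degen (X := pred (level (l + 2) h)) i ≫ degen j =
      degen (X := pred (level (l + 2) h)) (i.predAbove j) ≫ degen (j.succAbove i) := by
  have h₁ := coe_lt_of_coe_succ_le h
  have h₀ := coe_lt_of_coe_succ_le h₁.le
  rcases lt_or_ge i.castSucc j with hij | hji
  · rw [Fin.succAbove_of_castSucc_lt _ _ hij, Fin.predAbove_of_castSucc_lt _ _ hij]
    exact CategoryTheory.Quotient.sound _
      (CubeRel.rel4 l j i hij j.is_le i.is_le (by omega) (by omega) h₁ h₀)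
  · rw [Fin.succAbove_of_le_castSucc _ _ hji, Fin.predAbove_of_le_castSucc _ _ hji]
    exact (CategoryTheory.Quotient.sound _
      (CubeRel.rel4 l (i + 1) j (Nat.lt_succ_of_le hji) (by omega) (Nat.le_trans hji i.is_le)
        i.is_le j.is_le h₁ h₀)).symm

theorem face_face (b₁ b₂ : Bool) (j : Fin (l + 2)) (i : Fin (l + 1)) :
    face b₁ (X := level (l + 2) h) j ≫ face b₂ i =
      face b₂ (X := level (l + 2) h) (j.succAbove i) ≫ face b₁ (i.predAbove j) := by
  have h₁ := coe_lt_of_coe_succ_le h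
  have h₀ := coe_lt_of_coe_succ_le h₁.le
  rcases lt_or_ge i.castSucc j with hij | hji
  · obtain ⟨j, rfl⟩ := Fin.exists_succ_eq_of_ne_zero (Fin.ne_zero_of_lt hij)
    rw [Fin.succAbove_of_castSucc_lt _ _ hij, Fin.predAbove_of_castSucc_lt _ _ hij]
    exact (CategoryTheory.Quotient.sound _
      (CubeRel.rel5 b₂ b₁ l j i (Nat.le_of_lt_succ hij) j.is_le i.is_le (by omega) (by omega)
        h₁ h₀)).symm
  · rw [Fin.succAbove_of_le_castSucc _ _ hji, Fin.predAbove_of_le_castSucc _ _ hji]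
    exact CategoryTheory.Quotient.sound _
      (CubeRel.rel5 b₁ b₂ l i j hji i.is_le (Nat.le_trans hji i.is_le) j.is_le (by omega) h₁ h₀)

end Exchange

/-! ### Normal forms -/

/-- Composites of faces followed by degeneracies: the normal forms of the presentation. -/
inductive IsNormal : ∀ {X Y : CubeCat p}, (X ⟶ Y) → Prop
  | id (X : CubeCat p) : IsNormal (𝟙 X)
  | face_comp (b : Bool) {X Y : CubeCat p} (k : Fin X.as.lvl) {u : pred X ⟶ Y} :
      IsNormal u → IsNormal (face b k ≫ u)
  | comp_degen {X Y : CubeCat p} (k : Fin Y.as.lvl) {u : X ⟶ pred Y} :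
      IsNormal u → IsNormal (u ≫ degen k)

theorem IsNormal.comp_face {X Y : CubeCat p} {u : X ⟶ Y} (hu : IsNormal u) (b : Bool)
    (k : Fin Y.as.lvl) : IsNormal (u ≫ face b k) := by
  induction hu with
  | id =>
    rw [Category.id_comp, ← Category.comp_id (face b k)]
    exact .face_comp b k (.id _)
  | face_comp b' j _ ih =>
    rw [Category.assoc]
    exact .face_comp b' j (ih k)
  | @comp_degen _ Y j u hu ih =>
    obtain rfl | hkj := eq_or_ne k j
    · rwa [Category.assoc, degen_face_self, Category.comp_id]
    · obtain ⟨l, h, rfl⟩ := exists_eq_level_add_two hkj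
      obtain ⟨i, rfl⟩ := Fin.exists_succAbove_eq hkj
      rw [Category.assoc, degen_face_succAbove, ← Category.assoc]
      exact .comp_degen _ (ih i)

theorem isNormal_map {X Y : Paths (VV p)} (g : X ⟶ Y) :
    IsNormal ((Quotient.functor (cubeRel p)).map g) := by
  induction g using Paths.induction_fixed_source with
  | id => exact .id _
  | comp g a ih =>
    rw [Functor.map_comp]
    change GenArrow p _ _ at a
    cases a with
    | F b l k hk hl =>
      exact ih.comp_face (Y := level (l + 1) (succ_le_of_lt' hl)) b ⟨k, Nat.lt_succ_of_le hk⟩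
    | D l k hk hl =>
      exact ih.comp_degen (Y := level (l + 1) (succ_le_of_lt' hl)) ⟨k, Nat.lt_succ_of_le hk⟩

theorem isNormal {X Y : CubeCat p} (u : X ⟶ Y) : IsNormal u :=
  CategoryTheory.Quotient.induction (cubeRel p) (P := fun u => IsNormal u) isNormal_map u

/-! ### Normal forms are determined by their functions -/

/-- The functor induced by `canonicalFunctor` on the presented category. -/
abbrev toBox (p : ℕ∞) : CubeCat p ⥤ BoxCat :=
  CategoryTheory.Quotient.lift (cubeRel p) (canonicalFunctor p) canonicalFunctor_map_eq_of_cubeRel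

/-- The function underlying a morphism of the presented category: its image in `□`. -/
def eval {X Y : CubeCat p} (u : X ⟶ Y) : Fin X.as.lvl → Fin Y.as.lvl ⊕ Bool :=
  (toBox p).map u

theorem eval_id (X : CubeCat p) : eval (𝟙 X) = Sum.inl :=
  (toBox p).map_id X

theorem eval_comp {X Y Z : CubeCat p} (u : X ⟶ Y) (v : Y ⟶ Z) :
    eval (u ≫ v) = kcomp (eval v) (eval u) :=
  (toBox p).map_comp u v

theorem eval_face_comp_self (b : Bool) : ∀ {X Y : CubeCat p} (k : Fin X.as.lvl) (u : pred X ⟶ Y),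
    eval (face b k ≫ u) k = Sum.inr b
  | ⟨⟨l + 1, h⟩⟩, _, k, u => by
    rw [eval_comp, kcomp,
      show eval (face b (X := level (l + 1) h) k) k = Sum.inr b from faceMap_self b k]

theorem eval_face_comp_succAbove (b : Bool) {l : ℕ} (h : ((l + 1 : ℕ) : ℕ∞) ≤ p) {Y : CubeCat p}
    (k : Fin (l + 1)) (u : pred (level (l + 1) h) ⟶ Y) (i : Fin l) :
    eval (face b (X := level (l + 1) h) k ≫ u) (k.succAbove i) = eval u i := by
  rw [eval_comp, kcomp,
    show eval (face b (X := level (l + 1) h) k) (k.succAbove i) = Sum.inl i from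
      faceMap_succAbove b k i]

theorem exists_eval_face_comp_eq (b : Bool) : ∀ {X Y : CubeCat p} (k : Fin X.as.lvl)
    (u : pred X ⟶ Y) (i : Fin (pred X).as.lvl), ∃ j, eval (face b k ≫ u) j = eval u i
  | ⟨⟨_ + 1, h⟩⟩, _, k, u, i => ⟨k.succAbove i, eval_face_comp_succAbove b h k u i⟩

theorem eval_comp_degen {l : ℕ} (h : ((l + 1 : ℕ) : ℕ∞) ≤ p) {X : CubeCat p} (k : Fin (l + 1))
    (u : X ⟶ pred (level (l + 1) h)) (x : Fin X.as.lvl) :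
    eval (u ≫ degen (X := level (l + 1) h) k) x = Sum.map k.succAbove id (eval u x) := by
  rw [eval_comp, kcomp]
  cases eval u x with
  | inl j => exact degenMap_eq_succAbove k j
  | inr b => rfl

theorem eval_comp_degen_ne : ∀ {X Y : CubeCat p} (k : Fin Y.as.lvl) (u : X ⟶ pred Y)
    (x : Fin X.as.lvl), eval (u ≫ degen k) x ≠ Sum.inl k
  | _, ⟨⟨l + 1, h⟩⟩, k, u, x => by
    rw [eval_comp_degen h k u]
    cases eval u x with
    | inl j => exact fun hj => k.succAbove_ne j (Sum.inl_injective hj)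
    | inr b => exact Sum.inr_ne_inl

theorem eval_comp_degen_eq_inr_iff {X Y : CubeCat p} {k : Fin Y.as.lvl} {u : X ⟶ pred Y}
    {x : Fin X.as.lvl} {b : Bool} : eval (u ≫ degen k) x = Sum.inr b ↔ eval u x = Sum.inr b := by
  obtain ⟨⟨_ | l, h⟩⟩ := Y
  · exact k.elim0
  · rw [eval_comp_degen h k u]
    cases eval u x <;> simp

theorem eval_eq_of_eval_face_comp_eq {b : Bool} {X Y : CubeCat p} {k : Fin X.as.lvl}
    {u v : pred X ⟶ Y} (huv : eval (face b k ≫ u) = eval (face b k ≫ v)) : eval u = eval v := by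
  rw [← Category.id_comp u, ← Category.id_comp v, ← degen_face_self b k, Category.assoc,
    Category.assoc, eval_comp, huv, ← eval_comp]

theorem eval_eq_of_eval_comp_degen_eq {X Y : CubeCat p} {k : Fin Y.as.lvl}
    {u v : X ⟶ pred Y} (huv : eval (u ≫ degen k) = eval (v ≫ degen k)) : eval u = eval v := by
  rw [← Category.comp_id u, ← Category.comp_id v, ← degen_face_self true k, ← Category.assoc,
    ← Category.assoc, eval_comp, huv, ← eval_comp]

theorem exists_eq_face_comp {X Y : CubeCat p} {u : X ⟶ Y} {b : Bool} {k : Fin X.as.lvl}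
    (hk : eval u k = Sum.inr b) : ∃ v, u = face b k ≫ v := by
  induction isNormal u with
  | id =>
    rw [eval_id] at hk
    cases hk
  | @face_comp b' X _ j u _ ih =>
    obtain rfl | hkj := eq_or_ne k j
    · rw [eval_face_comp_self, Sum.inr.injEq] at hk
      exact ⟨u, by rw [hk]⟩
    · obtain ⟨l, h, rfl⟩ := exists_eq_level_add_two hkj
      obtain ⟨i, rfl⟩ := Fin.exists_succAbove_eq hkj
      rw [eval_face_comp_succAbove] at hk
      obtain ⟨v, rfl⟩ := ih hk
      exact ⟨_, by rw [← Category.assoc, face_face, Category.assoc]⟩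
  | comp_degen j _ ih =>
    obtain ⟨v, rfl⟩ := ih (eval_comp_degen_eq_inr_iff.1 hk)
    exact ⟨v ≫ degen j, Category.assoc _ _ _⟩

theorem exists_eq_comp_degen {X Y : CubeCat p} {u : X ⟶ Y} {k : Fin Y.as.lvl}
    (hk : ∀ x, eval u x ≠ Sum.inl k) : ∃ v, u = v ≫ degen k := by
  induction isNormal u with
  | id X => exact absurd (congrFun (eval_id X) k) (hk k)
  | @face_comp b X _ j u _ ih =>
    obtain ⟨v, rfl⟩ := ih fun x hx => by
      obtain ⟨y, hy⟩ := exists_eval_face_comp_eq b j u x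
      exact hk y (hy.trans hx)
    exact ⟨face b j ≫ v, (Category.assoc _ _ _).symm⟩
  | @comp_degen _ Y j u _ ih =>
    obtain rfl | hkj := eq_or_ne k j
    · exact ⟨u, rfl⟩
    · obtain ⟨l, h, rfl⟩ := exists_eq_level_add_two hkj
      obtain ⟨i, rfl⟩ := Fin.exists_succAbove_eq hkj
      obtain ⟨v, rfl⟩ := ih (k := i) fun x hx => hk x <| by
        rw [eval_comp_degen, hx, Sum.map_inl]
      exact ⟨_, by rw [Category.assoc, degen_degen, ← Category.assoc]⟩

theorem eq_id_of_eval_eq_inl {X : CubeCat p} {u : X ⟶ X} (hu : eval u = Sum.inl) : u = 𝟙 X := by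
  cases isNormal u with
  | id => rfl
  | @face_comp b _ _ k v => cases (congrFun hu k).symm.trans (eval_face_comp_self b k v)
  | comp_degen k => exact absurd (congrFun hu k) (eval_comp_degen_ne k _ k)

theorem eq_of_eval_eq {X Y : CubeCat p} {u v : X ⟶ Y} (huv : eval u = eval v) : u = v := by
  induction isNormal u with
  | id X => exact (eq_id_of_eval_eq_inl (huv.symm.trans (eval_id X))).symm
  | face_comp b k _ ih =>
    obtain ⟨v', rfl⟩ := exists_eq_face_comp (huv ▸ eval_face_comp_self b k _)
    rw [ih (eval_eq_of_eval_face_comp_eq huv)]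
  | comp_degen k _ ih =>
    obtain ⟨v', rfl⟩ := exists_eq_comp_degen (huv ▸ eval_comp_degen_ne k _)
    rw [ih (eval_eq_of_eval_comp_degen_eq huv)]

end CubeCat

/-! ### The image -/

theorem BoxP.levels_le {p : ℕ∞} {l₁ l₂ : ℕ} {f : Fin l₁ → Fin l₂ ⊕ Bool} (hf : BoxP p l₁ l₂ f) :
    (l₁ : ℕ∞) ≤ p ∧ (l₂ : ℕ∞) ≤ p := by
  induction hf with
  | id l hl => exact ⟨hl, hl⟩
  | face _ _ _ _ hl => exact ⟨succ_le_of_lt' hl, hl.le⟩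
  | degen _ _ _ hl => exact ⟨hl.le, succ_le_of_lt' hl⟩
  | comp _ _ ihf ihg => exact ⟨ihf.1, ihg.2⟩

theorem BoxP.exists_map_eq {p : ℕ∞} {l₁ l₂ : ℕ} {f : Fin l₁ → Fin l₂ ⊕ Bool}
    (hf : BoxP p l₁ l₂ f) (h₁ : (l₁ : ℕ∞) ≤ p) (h₂ : (l₂ : ℕ∞) ≤ p) :
    ∃ g : Quiver.Path (⟨l₁, h₁⟩ : VV p) ⟨l₂, h₂⟩,
      (canonicalFunctor p).map (X := ⟨l₁, h₁⟩) (Y := ⟨l₂, h₂⟩) g = boxHom f := by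
  induction hf with
  | id => exact ⟨Quiver.Path.nil, rfl⟩
  | face b l k hk hl => exact ⟨fPath p b l k hk hl, rfl⟩
  | degen l k hk hl => exact ⟨dPath p l k hk hl, rfl⟩
  | comp hf _ ihf ihg =>
    obtain ⟨u, hu⟩ := ihf h₁ hf.levels_le.2
    obtain ⟨v, hv⟩ := ihg hf.levels_le.2 h₂
    exact ⟨u.comp v, ((canonicalFunctor p).map_comp u v).trans (congrArg₂ kcomp hv hu)⟩

theorem boxP_map {p : ℕ∞} {X Y : VV p} (g : Quiver.Path X Y) :
    BoxP p X.lvl Y.lvl ((canonicalFunctor p).map (X := X) (Y := Y) g) := by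
  induction g with
  | nil => exact .id _ X.le
  | cons g a ih =>
    change GenArrow p _ _ at a
    cases a with
    | F b l k hk hl => exact .comp ih (.face b l k hk hl)
    | D l k hk hl => exact .comp ih (.degen l k hk hl)

/-- The canonical functor from the free category on `Q` to `□` identifies `∼`-related paths,
and the induced functor from the quotient category (the free category on `Q` modulo the
congruence generated by the five cubical relations) to `□` is faithful, with image exactly
the subcategory `□_p`. -/
theorem cube_presentation (p : ℕ∞) :
    ∃ H : ∀ (X Y : Paths (VV p)) (f g : X ⟶ Y),
        cubeRel p f g → (canonicalFunctor p).map f = (canonicalFunctor p).map g,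
      (CategoryTheory.Quotient.lift (cubeRel p) (canonicalFunctor p) H).Faithful ∧
      ∀ (l₁ l₂ : ℕ) (h₁ : (l₁ : ℕ∞) ≤ p) (h₂ : (l₂ : ℕ∞) ≤ p)
        (f : Fin l₁ → Fin l₂ ⊕ Bool),
        BoxP p l₁ l₂ f ↔
          ∃ g : Quiver.Path (⟨l₁, h₁⟩ : VV p) ⟨l₂, h₂⟩,
            @Prefunctor.map _ _ _ _ (canonicalFunctor p).toPrefunctor ⟨l₁, h₁⟩ ⟨l₂, h₂⟩ g
              = boxHom f := by
  refine ⟨canonicalFunctor_map_eq_of_cubeRel, ⟨CubeCat.eq_of_eval_eq⟩, ?_⟩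
  intro l₁ l₂ h₁ h₂ f
  constructor
  · exact fun hf => hf.exists_map_eq h₁ h₂
  · rintro ⟨g, hg⟩
    exact (show _ = f from hg) ▸ boxP_map g
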